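/- Let Q(x,y) = x⁴ + y⁴ − 6x²y² and G(x,y) = Q(x,y) · log(x² + y²), defined for (x,y) ∈ ℝ² \ {(0,0)}. For parameters δ, η > 0 define the vector field u = δ ∇⊥(ΔG) + η (y, 0) on B₁ \ {0}, where ∇⊥f = (∂_y f, −∂_x f). Then u is divergence free on B₁ \ {0}, and there exists a function J, bounded on B₁ \ {0}, such that det(∇u)(x,y) = η δ ∂²(ΔG)/∂x²(x,y) + δ² J(x,y) for all 0 < x² + y² < 1. -/

import Mathlib

/-- Partial derivative in the first variable. -/
noncomputable def pdx (f : ℝ → ℝ → ℝ) (x y : ℝ) : ℝ := deriv (fun t => f t y) x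

/-- Partial derivative in the second variable. -/
noncomputable def pdy (f : ℝ → ℝ → ℝ) (x y : ℝ) : ℝ := deriv (fun t => f x t) y

/-- The Laplacian `Δf = ∂²f/∂x² + ∂²f/∂y²`. -/
noncomputable def lap (f : ℝ → ℝ → ℝ) (x y : ℝ) : ℝ :=
  pdx (pdx f) x y + pdy (pdy f) x y

/-- The polynomial `Q(x,y) = x⁴ + y⁴ − 6 x² y²`. -/
def Q (x y : ℝ) : ℝ := x ^ 4 + y ^ 4 - 6 * x ^ 2 * y ^ 2

/-- `G(x,y) = Q(x,y) log(x² + y²)`. -/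
noncomputable def G (x y : ℝ) : ℝ := Q x y * Real.log (x ^ 2 + y ^ 2)

/-- First component of `u = δ ∇⊥(ΔG) + η (y, 0)`, where `∇⊥ f = (∂_y f, −∂_x f)`. -/
noncomputable def u₁ (δ η : ℝ) (x y : ℝ) : ℝ := δ * pdy (lap G) x y + η * y

/-- Second component of `u = δ ∇⊥(ΔG) + η (y, 0)`. -/
noncomputable def u₂ (δ : ℝ) (x y : ℝ) : ℝ := -(δ * pdx (lap G) x y)

/-!
The polynomial `Q` is harmonic and homogeneous of degree 4, and `log r²` is harmonic away from the
origin, so Euler's identity gives `Δ(Q log r²) = 2 ∇Q · ∇(log r²) = 16 Q / r²`: the logarithm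
disappears. Hence `ψ = ΔG` is smooth away from the origin and homogeneous of degree 2, its second
derivatives are homogeneous of degree 0, and its Hessian determinant takes all its values on the
unit circle, where it is bounded. For every stream function `ψ`, expanding the determinant gives
`det ∇u = η δ ψ_xx + δ² det D²ψ`, so `J = det D²ψ` works.
-/

open Function Topology

lemma sq_add_sq_pos_iff {x y : ℝ} : 0 < x ^ 2 + y ^ 2 ↔ (x, y) ≠ 0 := by
  rw [(by positivity : 0 ≤ x ^ 2 + y ^ 2).lt_iff_ne', not_iff_not, Prod.mk_eq_zero,
    add_eq_zero_iff_of_nonneg (sq_nonneg x) (sq_nonneg y), sq_eq_zero_iff, sq_eq_zero_iff]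

/-- Positive homogeneity of degree `k` away from the origin. Nothing is asked at `0`, since the
functions of interest are singular there. -/
def IsPosHomogeneous {E F : Type*} [AddCommGroup E] [Module ℝ E] [AddCommGroup F] [Module ℝ F]
    (k : ℤ) (f : E → F) : Prop :=
  ∀ ⦃t : ℝ⦄, 0 < t → ∀ ⦃v : E⦄, v ≠ 0 → f (t • v) = t ^ k • f v

namespace IsPosHomogeneous

variable {E F : Type*} [NormedAddCommGroup E] [NormedSpace ℝ E]
  [NormedAddCommGroup F] [NormedSpace ℝ F] {k : ℤ}

lemma hasFDerivAt_apply_self {f : E → F} {f' : E →L[ℝ] F} {v : E} (hf : IsPosHomogeneous k f)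
    (hv : v ≠ 0) (hf' : HasFDerivAt f f' v) : f' v = (k : ℝ) • f v := by
  have hray : HasDerivAt (fun t : ℝ => f (t • v)) (f' v) 1 := by
    have hline : HasDerivAt (fun t : ℝ => t • v) v 1 := by
      simpa using (hasDerivAt_id (1 : ℝ)).smul_const v
    exact (by simpa using hf' : HasFDerivAt f f' ((1 : ℝ) • v)).comp_hasDerivAt 1 hline
  have hpow : HasDerivAt (fun t : ℝ => t ^ k • f v) ((k : ℝ) • f v) 1 := by
    simpa using (hasDerivAt_zpow k (1 : ℝ) (Or.inl one_ne_zero)).smul_const (f v)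
  have heq : (fun t : ℝ => f (t • v)) =ᶠ[𝓝 1] fun t => t ^ k • f v := by
    filter_upwards [lt_mem_nhds one_pos] with t ht using hf ht hv
  exact hray.unique (hpow.congr_of_eventuallyEq heq)

lemma exists_norm_le [ProperSpace E] {f : E → F} (hf : IsPosHomogeneous 0 f)
    (hc : ContinuousOn f {0}ᶜ) : ∃ M : ℝ, ∀ v ≠ 0, ‖f v‖ ≤ M := by
  obtain ⟨M, hM⟩ := (isCompact_sphere (0 : E) 1).exists_bound_of_continuousOn
    (hc.mono fun _ hv => ne_zero_of_mem_unit_sphere ⟨_, hv⟩)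
  refine ⟨M, fun v hv => ?_⟩
  have hunit : f (‖v‖⁻¹ • v) = f v := by
    simpa using hf (inv_pos.mpr (norm_pos_iff.mpr hv)) hv
  rw [← hunit]
  exact hM _ (by simpa using norm_smul_inv_norm (𝕜 := ℝ) hv)

end IsPosHomogeneous

section PartialDerivatives

variable {f : ℝ → ℝ → ℝ} {x y : ℝ} {p : ℝ × ℝ} {m n : WithTop ℕ∞}

lemma pdx_eq_fderiv (hf : DifferentiableAt ℝ (uncurry f) (x, y)) :
    pdx f x y = fderiv ℝ (uncurry f) (x, y) (1, 0) := by
  have hline : HasDerivAt (fun t => (t, y)) (1, 0) x :=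
    (hasDerivAt_id x).prodMk (hasDerivAt_const x y)
  exact (hf.hasFDerivAt.comp_hasDerivAt x hline).deriv

lemma pdy_eq_fderiv (hf : DifferentiableAt ℝ (uncurry f) (x, y)) :
    pdy f x y = fderiv ℝ (uncurry f) (x, y) (0, 1) := by
  have hline : HasDerivAt (fun t => (x, t)) (0, 1) y :=
    (hasDerivAt_const y x).prodMk (hasDerivAt_id y)
  exact (hf.hasFDerivAt.comp_hasDerivAt y hline).deriv

lemma pdx_eventuallyEq_fderiv (hf : ContDiffAt ℝ 1 (uncurry f) p) :
    uncurry (pdx f) =ᶠ[𝓝 p] fun q => fderiv ℝ (uncurry f) q (1, 0) :=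
  (hf.eventually (by simp)).mono fun _ hq => pdx_eq_fderiv (hq.differentiableAt one_ne_zero)

lemma pdy_eventuallyEq_fderiv (hf : ContDiffAt ℝ 1 (uncurry f) p) :
    uncurry (pdy f) =ᶠ[𝓝 p] fun q => fderiv ℝ (uncurry f) q (0, 1) :=
  (hf.eventually (by simp)).mono fun _ hq => pdy_eq_fderiv (hq.differentiableAt one_ne_zero)

lemma contDiffAt_pdx (hf : ContDiffAt ℝ n (uncurry f) p) (hmn : m + 1 ≤ n) :
    ContDiffAt ℝ m (uncurry (pdx f)) p :=
  ((hf.fderiv_right hmn).clm_apply contDiffAt_const).congr_of_eventuallyEq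
    (pdx_eventuallyEq_fderiv (hf.of_le (le_add_self.trans hmn)))

lemma contDiffAt_pdy (hf : ContDiffAt ℝ n (uncurry f) p) (hmn : m + 1 ≤ n) :
    ContDiffAt ℝ m (uncurry (pdy f)) p :=
  ((hf.fderiv_right hmn).clm_apply contDiffAt_const).congr_of_eventuallyEq
    (pdy_eventuallyEq_fderiv (hf.of_le (le_add_self.trans hmn)))

lemma contDiffAt_lap (hf : ContDiffAt ℝ n (uncurry f) p) (hmn : m + 2 ≤ n) :
    ContDiffAt ℝ m (uncurry (lap f)) p := by
  have hmn' : m + 1 + 1 ≤ n := by rwa [add_assoc, one_add_one_eq_two]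
  exact (contDiffAt_pdx (contDiffAt_pdx hf hmn') le_rfl).add
    (contDiffAt_pdy (contDiffAt_pdy hf hmn') le_rfl)

lemma pdx_pdy_comm (hf : ContDiffAt ℝ 2 (uncurry f) (x, y)) :
    pdx (pdy f) x y = pdy (pdx f) x y := by
  have hf1 : ContDiffAt ℝ 1 (uncurry f) (x, y) := hf.of_le one_le_two
  have hf' : DifferentiableAt ℝ (fderiv ℝ (uncurry f)) (x, y) :=
    (hf.fderiv_right (m := 1) (by norm_num)).differentiableAt one_ne_zero
  have hsymm : IsSymmSndFDerivAt ℝ (uncurry f) (x, y) := hf.isSymmSndFDerivAt (by simp)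
  rw [pdx_eq_fderiv ((contDiffAt_pdy hf (m := 1) (by norm_num)).differentiableAt one_ne_zero),
    pdy_eq_fderiv ((contDiffAt_pdx hf (m := 1) (by norm_num)).differentiableAt one_ne_zero),
    (pdy_eventuallyEq_fderiv hf1).fderiv_eq, (pdx_eventuallyEq_fderiv hf1).fderiv_eq,
    fderiv_clm_apply hf' (differentiableAt_const _),
    fderiv_clm_apply hf' (differentiableAt_const _)]
  simpa using hsymm.eq (1, 0) (0, 1)

lemma IsPosHomogeneous.uncurry_pdx {k : ℤ} (hf : IsPosHomogeneous k (uncurry f)) :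
    IsPosHomogeneous (k - 1) (uncurry (pdx f)) := by
  rintro t ht ⟨x, y⟩ hxy
  have hslice : (fun s => f (t * s) (t * y)) =ᶠ[𝓝 x] fun s => t ^ k * f s y := by
    have hline : ContinuousAt (fun s : ℝ => (s, y)) x := by fun_prop
    filter_upwards [hline.eventually_ne hxy] with s hs using hf ht hs
  have hderiv : t * pdx f (t * x) (t * y) = t ^ k * pdx f x y := by
    have hslice' := hslice.deriv_eq
    rwa [deriv_comp_mul_left t (fun s => f s (t * y)), deriv_const_mul_field] at hslice'
  refine mul_left_cancel₀ ht.ne' (hderiv.trans ?_)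
  rw [smul_eq_mul, ← mul_assoc, ← zpow_one_add₀ ht.ne', add_sub_cancel, uncurry_apply_pair]

lemma IsPosHomogeneous.uncurry_pdy {k : ℤ} (hf : IsPosHomogeneous k (uncurry f)) :
    IsPosHomogeneous (k - 1) (uncurry (pdy f)) := by
  have hswap : IsPosHomogeneous k (uncurry fun a b => f b a) :=
    fun t ht v hv => hf ht (v := v.swap) (Prod.swap_injective.ne hv)
  exact fun t ht v hv => hswap.uncurry_pdx ht (v := v.swap) (Prod.swap_injective.ne hv)

lemma IsPosHomogeneous.mul_pdx_add_mul_pdy {k : ℤ} (hf : IsPosHomogeneous k (uncurry f))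
    (hxy : (x, y) ≠ 0) (hd : DifferentiableAt ℝ (uncurry f) (x, y)) :
    x * pdx f x y + y * pdy f x y = k * f x y := by
  have hv : (x, y) = x • ((1, 0) : ℝ × ℝ) + y • ((0, 1) : ℝ × ℝ) := by simp
  have heuler := hf.hasFDerivAt_apply_self hxy hd.hasFDerivAt
  rw [pdx_eq_fderiv hd, pdy_eq_fderiv hd]
  calc _ = fderiv ℝ (uncurry f) (x, y) (x • ((1, 0) : ℝ × ℝ) + y • ((0, 1) : ℝ × ℝ)) := by
        rw [map_add, map_smul, map_smul, smul_eq_mul, smul_eq_mul]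
    _ = k * f x y := by rw [← hv, heuler, smul_eq_mul, uncurry_apply_pair]

lemma deriv_deriv_mul {𝕜 𝔸 : Type*} [NontriviallyNormedField 𝕜] [NormedCommRing 𝔸]
    [NormedAlgebra 𝕜 𝔸] {a b : 𝕜 → 𝔸} {t : 𝕜} (ha : ContDiffAt 𝕜 2 a t)
    (hb : ContDiffAt 𝕜 2 b t) :
    deriv (deriv (a * b)) t =
      deriv (deriv a) t * b t + 2 * (deriv a t * deriv b t) + a t * deriv (deriv b) t := by
  have hleibniz := iteratedDeriv_mul (n := 2) ha hb
  simp only [iteratedDeriv_succ, iteratedDeriv_zero, Nat.reduceAdd, Finset.sum_range_succ,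
    Finset.range_one, Finset.sum_singleton, Nat.choose_zero_right, Nat.cast_one, one_mul, tsub_zero,
    Nat.choose_succ_self_right, Nat.cast_ofNat, Nat.add_one_sub_one, Nat.choose_self,
    tsub_self] at hleibniz
  linear_combination hleibniz

lemma lap_mul {g : ℝ → ℝ → ℝ} (hf : ContDiffAt ℝ 2 (uncurry f) (x, y))
    (hg : ContDiffAt ℝ 2 (uncurry g) (x, y)) :
    lap (fun x y => f x y * g x y) x y =
      lap f x y * g x y + 2 * (pdx f x y * pdx g x y + pdy f x y * pdy g x y)
        + f x y * lap g x y := by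
  have hx : ContDiffAt ℝ 2 (fun t : ℝ => (t, y)) x := by fun_prop
  have hy : ContDiffAt ℝ 2 (fun t : ℝ => (x, t)) y := by fun_prop
  have hxx := deriv_deriv_mul (hf.comp x hx) (hg.comp x hx)
  have hyy := deriv_deriv_mul (hf.comp y hy) (hg.comp y hy)
  -- `lap` is definitionally the sum of the second derivatives along the two coordinate lines.
  calc lap (fun x y => f x y * g x y) x y = _ + _ := congrArg₂ (· + ·) hxx hyy
    _ = _ := by
      simp only [lap, pdx, pdy, comp_def, uncurry_apply_pair]
      ring

end PartialDerivatives

section Logarithm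

variable {q : ℝ → ℝ → ℝ} {x y : ℝ}

lemma hasDerivAt_log_sq_add_sq (h : 0 < x ^ 2 + y ^ 2) :
    HasDerivAt (fun t => Real.log (t ^ 2 + y ^ 2)) (2 * x / (x ^ 2 + y ^ 2)) x := by
  simpa using ((hasDerivAt_pow 2 x).add_const (y ^ 2)).log h.ne'

lemma deriv_deriv_log_sq_add_sq (h : 0 < x ^ 2 + y ^ 2) :
    deriv (deriv fun t => Real.log (t ^ 2 + y ^ 2)) x =
      2 * (y ^ 2 - x ^ 2) / (x ^ 2 + y ^ 2) ^ 2 := by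
  have hderiv : deriv (fun t => Real.log (t ^ 2 + y ^ 2)) =ᶠ[𝓝 x]
      fun t => 2 * t / (t ^ 2 + y ^ 2) := by
    have hsq : ContinuousAt (fun t => t ^ 2 + y ^ 2) x := by fun_prop
    filter_upwards [continuousAt_const.eventually_lt hsq h] with t ht
    exact (hasDerivAt_log_sq_add_sq ht).deriv
  have hquot := ((hasDerivAt_id' x).const_mul 2).div ((hasDerivAt_pow 2 x).add_const (y ^ 2)) h.ne'
  rw [hderiv.deriv_eq]
  refine hquot.deriv.trans ?_
  simp only [Nat.cast_ofNat, Nat.add_one_sub_one, pow_one]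
  ring

lemma lap_log_sq_add_sq (h : 0 < x ^ 2 + y ^ 2) :
    lap (fun x y => Real.log (x ^ 2 + y ^ 2)) x y = 0 := by
  have h' : 0 < y ^ 2 + x ^ 2 := by rwa [add_comm]
  have hxx := deriv_deriv_log_sq_add_sq h
  have hyy := deriv_deriv_log_sq_add_sq h'
  simp only [add_comm _ (x ^ 2)] at hyy
  refine (congrArg₂ (· + ·) hxx hyy).trans ?_
  ring

lemma contDiffAt_log_sq_add_sq {n : WithTop ℕ∞} (h : 0 < x ^ 2 + y ^ 2) :
    ContDiffAt ℝ n (uncurry fun x y => Real.log (x ^ 2 + y ^ 2)) (x, y) :=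
  ContDiffAt.log (f := fun p : ℝ × ℝ => p.1 ^ 2 + p.2 ^ 2) (by fun_prop) h.ne'

lemma lap_mul_log_sq_add_sq {k : ℤ} (h : 0 < x ^ 2 + y ^ 2)
    (hq : ContDiffAt ℝ 2 (uncurry q) (x, y)) (hk : IsPosHomogeneous k (uncurry q)) :
    lap (fun x y => q x y * Real.log (x ^ 2 + y ^ 2)) x y =
      lap q x y * Real.log (x ^ 2 + y ^ 2) + 4 * k * (q x y / (x ^ 2 + y ^ 2)) := by
  have hx : pdx (fun x y => Real.log (x ^ 2 + y ^ 2)) x y = 2 * x / (x ^ 2 + y ^ 2) :=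
    (hasDerivAt_log_sq_add_sq h).deriv
  have hy : pdy (fun x y => Real.log (x ^ 2 + y ^ 2)) x y = 2 * y / (x ^ 2 + y ^ 2) := by
    simpa only [pdy, add_comm (x ^ 2)] using (hasDerivAt_log_sq_add_sq (by rwa [add_comm])).deriv
  have heuler := hk.mul_pdx_add_mul_pdy (sq_add_sq_pos_iff.mp h) (hq.differentiableAt two_ne_zero)
  rw [lap_mul hq (contDiffAt_log_sq_add_sq h), lap_log_sq_add_sq h, hx, hy]
  linear_combination 4 / (x ^ 2 + y ^ 2) * heuler

end Logarithm

/-- The Hessian determinant of `f`. The two mixed partial derivatives are kept apart, so that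
`det_grad_shearedFlow` is a polynomial identity; for `f = ΔG` this is the function `J`. -/
noncomputable def hessianDet (f : ℝ → ℝ → ℝ) (x y : ℝ) : ℝ :=
  pdx (pdx f) x y * pdy (pdy f) x y - pdx (pdy f) x y * pdy (pdx f) x y

section Hessian

variable {f : ℝ → ℝ → ℝ}

lemma IsPosHomogeneous.uncurry_hessianDet {k : ℤ} (hf : IsPosHomogeneous k (uncurry f)) :
    IsPosHomogeneous (2 * (k - 2)) (uncurry (hessianDet f)) := by
  rintro t ht ⟨x, y⟩ hv
  have hx := hf.uncurry_pdx
  have hy := hf.uncurry_pdy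
  have hxx := hx.uncurry_pdx ht hv
  have hxy := hy.uncurry_pdx ht hv
  have hyx := hx.uncurry_pdy ht hv
  have hyy := hy.uncurry_pdy ht hv
  have hpow : t ^ (2 * (k - 2)) = t ^ (k - 1 - 1) * t ^ (k - 1 - 1) := by
    rw [← zpow_add₀ ht.ne']
    ring_nf
  simp only [Prod.smul_mk, uncurry_apply_pair, smul_eq_mul] at hxx hxy hyx hyy ⊢
  rw [hessianDet, hxx, hxy, hyx, hyy, hpow, hessianDet]
  ring

lemma continuousAt_hessianDet {p : ℝ × ℝ} (hf : ContDiffAt ℝ 2 (uncurry f) p) :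
    ContinuousAt (uncurry (hessianDet f)) p := by
  have hx : ContDiffAt ℝ 1 (uncurry (pdx f)) p := contDiffAt_pdx hf (by norm_num)
  have hy : ContDiffAt ℝ 1 (uncurry (pdy f)) p := contDiffAt_pdy hf (by norm_num)
  have hxx : ContDiffAt ℝ 0 (uncurry (pdx (pdx f))) p := contDiffAt_pdx hx (by norm_num)
  have hxy : ContDiffAt ℝ 0 (uncurry (pdx (pdy f))) p := contDiffAt_pdx hy (by norm_num)
  have hyx : ContDiffAt ℝ 0 (uncurry (pdy (pdx f))) p := contDiffAt_pdy hx (by norm_num)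
  have hyy : ContDiffAt ℝ 0 (uncurry (pdy (pdy f))) p := contDiffAt_pdy hy (by norm_num)
  exact ((hxx.mul hyy).sub (hxy.mul hyx)).continuousAt

lemma exists_abs_hessianDet_le (hf : ∀ p ≠ 0, ContDiffAt ℝ 2 (uncurry f) p)
    (hk : IsPosHomogeneous 2 (uncurry f)) :
    ∃ M : ℝ, ∀ x y, (x, y) ≠ 0 → |hessianDet f x y| ≤ M := by
  obtain ⟨M, hM⟩ := hk.uncurry_hessianDet.exists_norm_le
    fun p hp => (continuousAt_hessianDet (hf p hp)).continuousWithinAt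
  exact ⟨M, fun x y hxy => hM (x, y) hxy⟩

end Hessian

section ShearedFlow

/-- First component of `δ ∇⊥ψ + η (y, 0)`, the Hamiltonian field of a stream function `ψ` plus
a linear shear. The component `u₁` is the case `ψ = ΔG`. -/
noncomputable def shearedFlow₁ (δ η : ℝ) (ψ : ℝ → ℝ → ℝ) (x y : ℝ) : ℝ := δ * pdy ψ x y + η * y

/-- Second component of `δ ∇⊥ψ + η (y, 0)`. The component `u₂` is the case `ψ = ΔG`. -/
noncomputable def shearedFlow₂ (δ : ℝ) (ψ : ℝ → ℝ → ℝ) (x y : ℝ) : ℝ := -(δ * pdx ψ x y)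

variable (δ η : ℝ) (ψ : ℝ → ℝ → ℝ) (x y : ℝ)

lemma pdx_shearedFlow₁ : pdx (shearedFlow₁ δ η ψ) x y = δ * pdx (pdy ψ) x y := by
  simp only [pdx, shearedFlow₁, deriv_add_const, deriv_const_mul_field]

lemma pdx_shearedFlow₂ : pdx (shearedFlow₂ δ ψ) x y = -(δ * pdx (pdx ψ) x y) := by
  simp only [pdx, shearedFlow₂, deriv.fun_neg, deriv_const_mul_field]

lemma pdy_shearedFlow₂ : pdy (shearedFlow₂ δ ψ) x y = -(δ * pdy (pdx ψ) x y) := by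
  simp only [pdy, shearedFlow₂, deriv.fun_neg, deriv_const_mul_field]

variable {ψ x y}

lemma pdy_shearedFlow₁ (hψ : ContDiffAt ℝ 2 (uncurry ψ) (x, y)) :
    pdy (shearedFlow₁ δ η ψ) x y = δ * pdy (pdy ψ) x y + η := by
  have hslice : DifferentiableAt ℝ (fun t => pdy ψ x t) y :=
    ((contDiffAt_pdy hψ (m := 1) (by norm_num)).differentiableAt one_ne_zero).comp y
      (f := fun t => (x, t)) (by fun_prop)
  exact ((hslice.hasDerivAt.const_mul δ).add (hasDerivAt_const_mul η)).deriv

lemma divergence_shearedFlow_eq_zero (hψ : ContDiffAt ℝ 2 (uncurry ψ) (x, y)) :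
    pdx (shearedFlow₁ δ η ψ) x y + pdy (shearedFlow₂ δ ψ) x y = 0 := by
  rw [pdx_shearedFlow₁, pdy_shearedFlow₂, pdx_pdy_comm hψ, add_neg_cancel]

lemma det_grad_shearedFlow (hψ : ContDiffAt ℝ 2 (uncurry ψ) (x, y)) :
    pdx (shearedFlow₁ δ η ψ) x y * pdy (shearedFlow₂ δ ψ) x y
        - pdy (shearedFlow₁ δ η ψ) x y * pdx (shearedFlow₂ δ ψ) x y =
      η * δ * pdx (pdx ψ) x y + δ ^ 2 * hessianDet ψ x y := by
  rw [pdx_shearedFlow₁, pdy_shearedFlow₂, pdy_shearedFlow₁ δ η hψ, pdx_shearedFlow₂, hessianDet]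
  ring

end ShearedFlow

section StreamFunction

variable {x y : ℝ}

lemma isPosHomogeneous_Q : IsPosHomogeneous 4 (uncurry Q) := by
  rintro t - ⟨x, y⟩ -
  simp only [Prod.smul_mk, uncurry_apply_pair, smul_eq_mul, Q, zpow_ofNat]
  ring

lemma contDiff_Q {n : WithTop ℕ∞} : ContDiff ℝ n (uncurry Q) := by
  unfold Q uncurry
  fun_prop

lemma deriv_deriv_Q : deriv (deriv fun t => Q t y) x = 12 * (x ^ 2 - y ^ 2) := by
  have hderiv : deriv (fun t => Q t y) = fun t => 4 * t ^ 3 - 12 * y ^ 2 * t := by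
    funext t
    have hQ := ((hasDerivAt_pow 4 t).add_const (y ^ 4)).sub
      (((hasDerivAt_pow 2 t).const_mul 6).mul_const (y ^ 2))
    exact hQ.deriv.trans (by push_cast; ring)
  have hcubic := ((hasDerivAt_pow 3 x).const_mul 4).sub (hasDerivAt_const_mul (12 * y ^ 2))
  rw [hderiv]
  exact hcubic.deriv.trans (by push_cast; ring)

lemma Q_comm : Q x y = Q y x := by
  unfold Q
  ring

lemma lap_Q : lap Q x y = 0 := by
  have hyy : deriv (deriv fun t => Q x t) y = 12 * (y ^ 2 - x ^ 2) := by
    simpa only [Q_comm (x := x)] using deriv_deriv_Q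
  refine (congrArg₂ (· + ·) deriv_deriv_Q hyy).trans ?_
  ring

lemma lap_G (h : 0 < x ^ 2 + y ^ 2) : lap G x y = 16 * (Q x y / (x ^ 2 + y ^ 2)) := by
  refine (lap_mul_log_sq_add_sq h contDiff_Q.contDiffAt isPosHomogeneous_Q).trans ?_
  rw [lap_Q]
  norm_num

lemma isPosHomogeneous_lap_G : IsPosHomogeneous 2 (uncurry (lap G)) := by
  rintro t ht ⟨x, y⟩ hv
  have hs : 0 < x ^ 2 + y ^ 2 := sq_add_sq_pos_iff.mpr hv
  have hts : 0 < (t * x) ^ 2 + (t * y) ^ 2 := sq_add_sq_pos_iff.mpr (smul_ne_zero ht.ne' hv)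
  have hQ : Q (t * x) (t * y) = t ^ 4 * Q x y := isPosHomogeneous_Q ht hv
  simp only [Prod.smul_mk, uncurry_apply_pair, smul_eq_mul, lap_G hs, lap_G hts, hQ, zpow_ofNat]
  field_simp

lemma contDiffAt_lap_G {n : WithTop ℕ∞} (h : 0 < x ^ 2 + y ^ 2) :
    ContDiffAt ℝ n (uncurry (lap G)) (x, y) :=
  contDiffAt_lap (contDiff_Q.contDiffAt.mul (contDiffAt_log_sq_add_sq h)) le_rfl

end StreamFunction

theorem u_div_free_and_det_grad_u_general :
    (∀ δ η x y : ℝ, 0 < x ^ 2 + y ^ 2 → pdx (u₁ δ η) x y + pdy (u₂ δ) x y = 0) ∧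
    (∃ J : ℝ → ℝ → ℝ,
      (∃ M : ℝ, ∀ x y : ℝ, 0 < x ^ 2 + y ^ 2 → |J x y| ≤ M) ∧
      (∀ δ η x y : ℝ, 0 < x ^ 2 + y ^ 2 →
        pdx (u₁ δ η) x y * pdy (u₂ δ) x y - pdy (u₁ δ η) x y * pdx (u₂ δ) x y =
          η * δ * pdx (pdx (lap G)) x y + δ ^ 2 * J x y)) := by
  obtain ⟨M, hM⟩ := exists_abs_hessianDet_le
    (fun _ hp => contDiffAt_lap_G (sq_add_sq_pos_iff.mpr hp)) isPosHomogeneous_lap_G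
  exact ⟨fun δ η _ _ h => divergence_shearedFlow_eq_zero δ η (contDiffAt_lap_G h),
    hessianDet (lap G), ⟨M, fun x y h => hM x y (sq_add_sq_pos_iff.mp h)⟩,
    fun δ η _ _ h => det_grad_shearedFlow δ η (contDiffAt_lap_G h)⟩

/-- The vector field `u = δ ∇⊥(ΔG) + η (y,0)` is divergence free on the punctured unit
ball, and `det(∇u) = η δ ∂²(ΔG)/∂x² + δ² J` with `J` bounded there. -/
theorem u_div_free_and_det_grad_u (δ η : ℝ) (hδ : 0 < δ) (hη : 0 < η) :
    (∀ x y : ℝ, 0 < x ^ 2 + y ^ 2 → x ^ 2 + y ^ 2 < 1 →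
      pdx (u₁ δ η) x y + pdy (u₂ δ) x y = 0) ∧
    (∃ J : ℝ → ℝ → ℝ,
      (∃ M : ℝ, ∀ x y : ℝ, 0 < x ^ 2 + y ^ 2 → x ^ 2 + y ^ 2 < 1 → |J x y| ≤ M) ∧
      (∀ x y : ℝ, 0 < x ^ 2 + y ^ 2 → x ^ 2 + y ^ 2 < 1 →
        pdx (u₁ δ η) x y * pdy (u₂ δ) x y - pdy (u₁ δ η) x y * pdx (u₂ δ) x y =
          η * δ * pdx (pdx (lap G)) x y + δ ^ 2 * J x y)) := by
  obtain ⟨hdiv, J, ⟨M, hM⟩, hdet⟩ := u_div_free_and_det_grad_u_general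
  exact ⟨fun x y h _ => hdiv δ η x y h, J, ⟨M, fun x y h _ => hM x y h⟩,
    fun x y h _ => hdet δ η x y h⟩
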